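/- arXiv:2502.17707 — 2 statements merged into one kernel-verified Lean document; each statement's English description precedes it below -/
import Mathlib

section
/- Let M be an n-manifold. (a) A connected open Hausdorff subset U ⊆ M is CH-maximal if and only if the closure of NH(U) equals (closure of U) − U. (b) If U ⊆ M is H-maximal, then the closure of NH(U) equals (closure of U) − U, which equals M − U. -/
open Set Topology TopologicalSpace

universe u

/-- Two points are inseparable (`x ⋈ y`): distinct, and every open set containing
one meets every open set containing the other. -/
def Bump {X : Type u} [TopologicalSpace X] (x y : X) : Prop :=
  x ≠ y ∧ ∀ U V : Set X, IsOpen U → IsOpen V → x ∈ U → y ∈ V → (U ∩ V).Nonempty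

/-- `NH A` = points inseparable from some point of `A`. -/
def NH {X : Type u} [TopologicalSpace X] (A : Set X) : Set X :=
  {y | ∃ x ∈ A, Bump y x}

/-- `NHpt x = NH {x}`. -/
def NHpt {X : Type u} [TopologicalSpace X] (x : X) : Set X := NH {x}

/-- An Euclidean subset: open and homeomorphic to ℝⁿ. -/
def IsEuclidean {X : Type u} [TopologicalSpace X] (n : ℕ) (U : Set X) : Prop :=
  IsOpen U ∧ Nonempty (U ≃ₜ EuclideanSpace ℝ (Fin n))

/-- An `n`-manifold: nonempty connected space, every point has an open
neighborhood homeomorphic to ℝⁿ (Hausdorffness NOT assumed). -/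
def IsNManifold (X : Type u) [TopologicalSpace X] (n : ℕ) : Prop :=
  ConnectedSpace X ∧ ∀ x : X, ∃ U : Set X, x ∈ U ∧ IsEuclidean n U

/-- Locally Hausdorff space. -/
def LocallyHausdorff (X : Type u) [TopologicalSpace X] : Prop :=
  ∀ x : X, ∃ U : Set X, IsOpen U ∧ x ∈ U ∧ T2Space U

/-- Quasi-countably-compact subset: every countable open cover has a finite subcover. -/
def QuasiCountablyCompact {X : Type u} [TopologicalSpace X] (K : Set X) : Prop :=
  ∀ U : ℕ → Set X, (∀ n, IsOpen (U n)) → K ⊆ ⋃ n, U n →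
    ∃ s : Finset ℕ, K ⊆ ⋃ n ∈ s, U n

/-- `A` is `κ`-Baire in `X`: not covered by fewer than `κ` nowhere dense sets. -/
def KappaBaire {X : Type u} [TopologicalSpace X] (κ : Cardinal.{u}) (A : Set X) : Prop :=
  ∀ (ι : Type u) (F : ι → Set X), Cardinal.mk ι < κ →
    (∀ i, IsNowhereDense (F i)) → ¬ A ⊆ ⋃ i, F i

/-- `S` is a scan of `A` in `X`. -/
def IsScan {X : Type u} [TopologicalSpace X] (S A : Set X) : Prop :=
  S ⊆ NH A ∧ ∀ x ∈ A, ((NHpt x).Nonempty ↔ (NHpt x ∩ S).Nonempty)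

/-- `U` is sorted: a continuous map from `closure U` to a Hausdorff space,
injective on `U`. -/
def IsSorted {X : Type u} [TopologicalSpace X] (U : Set X) : Prop :=
  ∃ (H : Type u) (tH : TopologicalSpace H) (f : closure U → H),
    @T2Space H tH ∧ @Continuous _ H _ tH f ∧
      ∀ a b : closure U, (a : X) ∈ U → (b : X) ∈ U → f a = f b → a = b

/-- `U` is weakly sorted: a continuous map from `closure U` to a Hausdorff space,
finite-to-one on `U`. -/
def IsWeaklySorted {X : Type u} [TopologicalSpace X] (U : Set X) : Prop :=
  ∃ (H : Type u) (tH : TopologicalSpace H) (f : closure U → H),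
    @T2Space H tH ∧ @Continuous _ H _ tH f ∧
      ∀ h : H, {a : closure U | (a : X) ∈ U ∧ f a = h}.Finite

/-- H-maximal: open Hausdorff, with no open Hausdorff proper superset. -/
def IsHMaximal {X : Type u} [TopologicalSpace X] (U : Set X) : Prop :=
  IsOpen U ∧ T2Space U ∧
    ∀ V : Set X, IsOpen V → T2Space V → U ⊆ V → V = U

/-- CH-maximal: connected open Hausdorff, with no connected open Hausdorff
proper superset. -/
def IsCHMaximal {X : Type u} [TopologicalSpace X] (U : Set X) : Prop :=
  IsConnected U ∧ IsOpen U ∧ T2Space U ∧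
    ∀ V : Set X, IsConnected V → IsOpen V → T2Space V → U ⊆ V → V = U

/-- `U` is f-simple at `p`: every open `V ∋ p` contains an open `W ∋ p` such that
`W ∩ U` has finitely many connected components. -/
def FSimpleAt {X : Type u} [TopologicalSpace X] (U : Set X) (p : X) : Prop :=
  ∀ V : Set X, IsOpen V → p ∈ V → ∃ W : Set X, IsOpen W ∧ p ∈ W ∧ W ⊆ V ∧
    {C : Set X | ∃ z ∈ W ∩ U, C = connectedComponentIn (W ∩ U) z}.Finite

/-- f-rim-simple: f-simple at every boundary point. -/
def FRimSimple {X : Type u} [TopologicalSpace X] (U : Set X) : Prop :=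
  ∀ p ∈ closure U \ U, FSimpleAt U p

/-- cov(ℳ): least cardinality of a family of nowhere dense subsets of ℝ covering ℝ. -/
noncomputable def covMeager : Cardinal :=
  sInf {c : Cardinal | ∃ (ι : Type) (F : ι → Set ℝ),
    Cardinal.mk ι = c ∧ (∀ i, IsNowhereDense (F i)) ∧ ⋃ i, F i = Set.univ}

/-- A locally compact first countable S-space: Hausdorff, regular, locally compact,
first countable, hereditarily separable, not Lindelöf. -/
def IsLCFCSSpace (S : Type) [TopologicalSpace S] : Prop :=
  T2Space S ∧ RegularSpace S ∧ LocallyCompactSpace S ∧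
    FirstCountableTopology S ∧ (∀ A : Set S, SeparableSpace A) ∧ ¬ LindelofSpace S

/-!
An open set `U` is Hausdorff exactly when it is disjoint from `NH U`, so adjoining to an open
Hausdorff `U` a small open Hausdorff set missing `closure (NH U)` keeps it Hausdorff. Hence a
maximal `U` leaves no room outside `closure (NH U)`; in the connected setting the adjoined set must
meet `U`, so only the points of `frontier U = closure U \ U` are reached. Conversely, a connected
`V` properly containing `U` meets `frontier U`; if this is `closure (NH U)`, then the open set `V`
meets `NH U` and is not Hausdorff.
-/

section

variable {X : Type u} [TopologicalSpace X] {U V A B : Set X} {x y p : X}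

theorem bump_iff_not_disjoint_nhds : Bump x y ↔ x ≠ y ∧ ¬Disjoint (𝓝 x) (𝓝 y) := by
  simp only [Bump, (nhds_basis_opens x).disjoint_iff (nhds_basis_opens y),
    Set.not_disjoint_iff_nonempty_inter, not_exists, not_and, and_imp]
  grind

theorem Bump.symm (h : Bump x y) : Bump y x := by
  rw [bump_iff_not_disjoint_nhds] at h ⊢
  exact ⟨h.1.symm, fun hd => h.2 hd.symm⟩

theorem mem_NH : y ∈ NH A ↔ ∃ x ∈ A, Bump y x := Iff.rfl

theorem NH_mono (h : A ⊆ B) : NH A ⊆ NH B :=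
  fun _ ⟨x, hx, hyx⟩ => ⟨x, h hx, hyx⟩

theorem NH_union (A B : Set X) : NH (A ∪ B) = NH A ∪ NH B := by
  ext y
  simp only [mem_NH, mem_union, or_and_right, exists_or]

theorem disjoint_NH_comm : Disjoint A (NH B) ↔ Disjoint B (NH A) := by
  simp only [disjoint_left, mem_NH, not_exists, not_and]
  exact ⟨fun h x hx y hy hxy => h hy x hx hxy.symm, fun h x hx y hy hxy => h hy x hx hxy.symm⟩

theorem t2Space_iff_disjoint_NH (hU : IsOpen U) : T2Space U ↔ Disjoint U (NH U) := by
  have disjoint_nhds_coe (x y : U) : Disjoint (𝓝 x) (𝓝 y) ↔ Disjoint (𝓝 (x : X)) (𝓝 (y : X)) := by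
    rw [← hU.isOpenEmbedding_subtypeVal.map_nhds_eq, ← hU.isOpenEmbedding_subtypeVal.map_nhds_eq,
      Filter.disjoint_map Subtype.val_injective]
  simp only [t2Space_iff_disjoint_nhds, Pairwise, disjoint_nhds_coe, Subtype.forall, disjoint_left,
    mem_NH, bump_iff_not_disjoint_nhds, not_exists, not_and, not_not, Ne, Subtype.mk.injEq]

theorem NH_subset_closure (hU : IsOpen U) : NH U ⊆ closure U := by
  rintro y ⟨x, hx, -, hyx⟩
  exact mem_closure_iff.2 fun V hV hy => hyx V U hV hU hy hx

theorem closure_NH_subset_frontier (hU : IsOpen U) (hUT : T2Space U) :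
    closure (NH U) ⊆ frontier U := by
  refine closure_minimal ?_ isClosed_frontier
  rw [hU.frontier_eq]
  exact subset_sdiff.2 ⟨NH_subset_closure hU, ((t2Space_iff_disjoint_NH hU).1 hUT).symm⟩

theorem t2Space_union (hU : IsOpen U) (hV : IsOpen V) (hUT : T2Space U) (hVT : T2Space V)
    (hVU : Disjoint V (NH U)) : T2Space ↥(U ∪ V) := by
  rw [t2Space_iff_disjoint_NH hU] at hUT
  rw [t2Space_iff_disjoint_NH hV] at hVT
  rw [t2Space_iff_disjoint_NH (hU.union hV), NH_union, disjoint_union_left, disjoint_union_right,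
    disjoint_union_right]
  exact ⟨⟨hUT, disjoint_NH_comm.1 hVU⟩, hVU, hVT⟩

theorem t2Space_of_subset [T2Space B] (hAB : A ⊆ B) : T2Space A :=
  (IsEmbedding.inclusion hAB).t2Space

theorem LocallyHausdorff.exists_isOpen_t2Space_union (hX : LocallyHausdorff X) (hU : IsOpen U)
    (hUT : T2Space U) (hp : p ∉ closure (NH U)) :
    ∃ W, IsOpen W ∧ p ∈ W ∧ T2Space ↥(U ∪ W) := by
  obtain ⟨H, hH, hpH, hHT⟩ := hX p
  have hW : IsOpen (H \ closure (NH U)) := hH.sdiff isClosed_closure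
  have hWU : Disjoint (H \ closure (NH U)) (NH U) := disjoint_sdiff_left.mono_right subset_closure
  exact ⟨_, hW, ⟨hpH, hp⟩, t2Space_union hU hW hUT (t2Space_of_subset sdiff_subset) hWU⟩

theorem IsHMaximal.compl_subset_closure_NH (hX : LocallyHausdorff X) (hU : IsHMaximal U) :
    Uᶜ ⊆ closure (NH U) := by
  obtain ⟨hUo, hUT, hmax⟩ := hU
  intro p hpU
  by_contra hp
  obtain ⟨W, hW, hpW, hUWT⟩ := hX.exists_isOpen_t2Space_union hUo hUT hp
  have hUW : U ∪ W = U := hmax _ (hUo.union hW) hUWT subset_union_left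
  exact hpU (union_eq_left.1 hUW hpW)

theorem IsCHMaximal.frontier_subset_closure_NH [LocallyConnectedSpace X] (hX : LocallyHausdorff X)
    (hU : IsCHMaximal U) : frontier U ⊆ closure (NH U) := by
  obtain ⟨hUc, hUo, hUT, hmax⟩ := hU
  rw [hUo.frontier_eq]
  rintro p ⟨hpcl, hpU⟩
  by_contra hp
  obtain ⟨W, hW, hpW, hUWT⟩ := hX.exists_isOpen_t2Space_union hUo hUT hp
  let C := connectedComponentIn W p
  have hC : IsOpen C := hW.connectedComponentIn
  have hpC : p ∈ C := mem_connectedComponentIn hpW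
  have hUC : (U ∩ C).Nonempty := inter_comm C U ▸ mem_closure_iff.1 hpcl C hC hpC
  have hUCc : IsConnected (U ∪ C) := hUc.union hUC (isConnected_connectedComponentIn_iff.2 hpW)
  have hUCT : T2Space ↥(U ∪ C) :=
    t2Space_of_subset (union_subset_union_right U (connectedComponentIn_subset W p))
  have hUC_eq : U ∪ C = U := hmax _ hUCc (hUo.union hC) hUCT subset_union_left
  exact hpU (union_eq_left.1 hUC_eq hpC)

theorem isCHMaximal_of_frontier_subset_closure_NH (hUc : IsConnected U) (hU : IsOpen U)
    (hUT : T2Space U) (hfr : frontier U ⊆ closure (NH U)) : IsCHMaximal U := by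
  refine ⟨hUc, hU, hUT, fun V hVc hV hVT hUV => ?_⟩
  have hVNH : Disjoint V (NH U) := ((t2Space_iff_disjoint_NH hV).1 hVT).mono_right (NH_mono hUV)
  have hVfr : Disjoint V (frontier U) := (hVNH.closure_right hV).mono_right hfr
  have hcl : closure U ∩ V ⊆ U := fun v ⟨hvcl, hvV⟩ =>
    by_contra fun hvU => hVfr.notMem_of_mem_left hvV (hU.frontier_eq ▸ ⟨hvcl, hvU⟩)
  have hVU : (V ∩ U).Nonempty := (inter_eq_right.2 hUV).symm ▸ hUc.nonempty
  exact (hVc.isPreconnected.subset_of_closure_inter_subset hU hVU hcl).antisymm hUV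

theorem locallyConnectedSpace_of_forall_exists_isOpen
    (h : ∀ x : X, ∃ U : Set X, IsOpen U ∧ x ∈ U ∧ LocallyConnectedSpace U) :
    LocallyConnectedSpace X := by
  refine locallyConnectedSpace_iff_connected_subsets.2 fun x N hN => ?_
  obtain ⟨U, hU, hx, hUlc⟩ := h x
  obtain ⟨C, hC, hCc, hCN⟩ := locallyConnectedSpace_iff_connected_subsets.1 hUlc ⟨x, hx⟩ _
    (continuous_subtype_val.continuousAt.preimage_mem_nhds hN)
  exact ⟨Subtype.val '' C, hU.isOpenMap_subtype_val.image_mem_nhds hC,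
    hCc.image _ continuous_subtype_val.continuousOn, image_subset_iff.2 hCN⟩

theorem IsNManifold.locallyHausdorff {n : ℕ} (hX : IsNManifold X n) : LocallyHausdorff X := by
  intro x
  obtain ⟨E, hxE, hE, ⟨e⟩⟩ := hX.2 x
  exact ⟨E, hE, hxE, e.symm.t2Space⟩

theorem IsNManifold.locallyConnectedSpace {n : ℕ} (hX : IsNManifold X n) :
    LocallyConnectedSpace X := by
  refine locallyConnectedSpace_of_forall_exists_isOpen fun x => ?_
  obtain ⟨E, hxE, hE, ⟨e⟩⟩ := hX.2 x
  exact ⟨E, hE, hxE, e.isOpenEmbedding.locallyConnectedSpace⟩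

end

theorem stmt4_general {M : Type u} [TopologicalSpace M] [LocallyConnectedSpace M]
    (hM : LocallyHausdorff M) :
    (∀ U : Set M, IsConnected U → IsOpen U → T2Space U →
      (IsCHMaximal U ↔ closure (NH U) = closure U \ U)) ∧
    (∀ U : Set M, IsHMaximal U →
      closure (NH U) = closure U \ U ∧ closure U \ U = Set.univ \ U) := by
  refine ⟨fun U hUc hU hUT => ?_, fun U hmax => ?_⟩
  · rw [← hU.frontier_eq]
    exact ⟨fun hmax => (closure_NH_subset_frontier hU hUT).antisymm
        (hmax.frontier_subset_closure_NH hM),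
      fun h => isCHMaximal_of_frontier_subset_closure_NH hUc hU hUT h.ge⟩
  · have hNH : closure (NH U) ⊆ closure U \ U :=
      hmax.1.frontier_eq ▸ closure_NH_subset_frontier hmax.1 hmax.2.1
    have hdiff : closure U \ U ⊆ univ \ U := sdiff_subset_sdiff_left (subset_univ _)
    have hcompl : univ \ U ⊆ closure (NH U) :=
      compl_eq_univ_sdiff U ▸ hmax.compl_subset_closure_NH hM
    exact ⟨hNH.antisymm (hdiff.trans hcompl), hdiff.antisymm (hcompl.trans hNH)⟩

/-- (a) A connected open Hausdorff `U` is CH-maximal iff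
`closure (NH U) = closure U − U`.  (b) If `U` is H-maximal then
`closure (NH U) = closure U − U = M − U`. -/
theorem stmt4 {M : Type u} [TopologicalSpace M] (n : ℕ) (hM : IsNManifold M n) :
    (∀ U : Set M, IsConnected U → IsOpen U → T2Space U →
      (IsCHMaximal U ↔ closure (NH U) = closure U \ U)) ∧
    (∀ U : Set M, IsHMaximal U →
      closure (NH U) = closure U \ U ∧ closure U \ U = Set.univ \ U) := by
  have := hM.locallyConnectedSpace
  exact stmt4_general hM.locallyHausdorff
end

section
/- Let M be an n-manifold and K ⊆ M a quasi-compact subset with NH(K) ∩ K = ∅. Then there is an open subset U of M which is Hausdorff in the subspace topology and contains K. -/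
open Set Topology TopologicalSpace

universe u

/-!
In a locally Hausdorff space, non-inseparability is an open relation: a pair of points with disjoint
neighbourhoods has a product neighbourhood of such pairs, and a diagonal pair `(x, x)` has the
neighbourhood `U ×ˢ U` with `U ∋ x` open and Hausdorff. If `NH K ∩ K = ∅`, this open relation
contains `K ×ˢ K`, so for `K` quasi-compact the tube lemma gives an open `U ⊇ K` with no two points
inseparable.
-/

section Inseparable

variable {X : Type u} [TopologicalSpace X] {x y : X} {A U : Set X}

theorem bump_iff_ne_and_not_disjoint_nhds : Bump x y ↔ x ≠ y ∧ ¬ Disjoint (𝓝 x) (𝓝 y) := by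
  rw [Bump, (nhds_basis_opens x).disjoint_iff (nhds_basis_opens y)]
  push Not
  simp only [not_disjoint_iff_nonempty_inter]
  grind

theorem not_bump_iff_eq_or_disjoint_nhds : ¬ Bump x y ↔ x = y ∨ Disjoint (𝓝 x) (𝓝 y) := by
  rw [bump_iff_ne_and_not_disjoint_nhds, not_and_not_right, or_iff_not_imp_left]

theorem not_bump_of_isOpen_of_t2Space [T2Space U] (hU : IsOpen U) (hx : x ∈ U) (hy : y ∈ U) :
    ¬ Bump x y := by
  rw [not_bump_iff_eq_or_disjoint_nhds, or_iff_not_imp_left]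
  intro hxy
  have hdisj : Disjoint (𝓝 (⟨x, hx⟩ : U)) (𝓝 ⟨y, hy⟩) :=
    disjoint_nhds_nhds.2 (Subtype.coe_ne_coe.1 hxy)
  rwa [← Filter.disjoint_map Subtype.val_injective,
    map_nhds_subtype_coe_eq_nhds hx (hU.mem_nhds hx),
    map_nhds_subtype_coe_eq_nhds hy (hU.mem_nhds hy)] at hdisj

theorem t2Space_coe_of_forall_not_bump (hA : ∀ x ∈ A, ∀ y ∈ A, ¬ Bump x y) : T2Space A := by
  refine t2Space_iff_disjoint_nhds.2 fun x y hxy => ?_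
  have hdisj : Disjoint (𝓝 (x : X)) (𝓝 (y : X)) :=
    (not_bump_iff_eq_or_disjoint_nhds.1 (hA x x.2 y y.2)).resolve_left (Subtype.coe_ne_coe.2 hxy)
  simpa only [nhds_subtype] using Filter.disjoint_comap hdisj

theorem NH_inter_self_eq_empty_iff : NH A ∩ A = ∅ ↔ ∀ x ∈ A, ∀ y ∈ A, ¬ Bump x y := by
  simp only [NH, eq_empty_iff_forall_notMem, mem_inter_iff, mem_ofPred_eq]
  grind

theorem isOpen_setOfPred_not_bump (hX : LocallyHausdorff X) :
    IsOpen {p : X × X | ¬ Bump p.1 p.2} := by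
  refine isOpen_iff_mem_nhds.2 ?_
  rintro ⟨x, y⟩ (hxy : ¬ Bump x y)
  rcases not_bump_iff_eq_or_disjoint_nhds.1 hxy with rfl | hdisj
  · obtain ⟨U, hU, hxU, hT2⟩ := hX x
    filter_upwards [prod_mem_nhds (hU.mem_nhds hxU) (hU.mem_nhds hxU)] with p hp
    exact not_bump_of_isOpen_of_t2Space hU hp.1 hp.2
  · filter_upwards [isOpen_setOfPred_disjoint_nhds_nhds.mem_nhds hdisj] with p hp
    exact not_bump_iff_eq_or_disjoint_nhds.2 (Or.inr hp)

end Inseparable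

theorem IsNManifold.locallyHausdorff_s15 {M : Type u} [TopologicalSpace M] {n : ℕ}
    (hM : IsNManifold M n) : LocallyHausdorff M := by
  intro x
  obtain ⟨U, hxU, hU, ⟨e⟩⟩ := hM.2 x
  exact ⟨U, hU, hxU, e.symm.t2Space⟩

theorem stmt15_general {X : Type u} [TopologicalSpace X] (hX : LocallyHausdorff X)
    (K : Set X) (hK : IsCompact K) (hNH : NH K ∩ K = ∅) :
    ∃ U : Set X, IsOpen U ∧ T2Space U ∧ K ⊆ U := by
  have hKK : K ×ˢ K ⊆ {p : X × X | ¬ Bump p.1 p.2} := fun p hp =>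
    NH_inter_self_eq_empty_iff.1 hNH p.1 hp.1 p.2 hp.2
  obtain ⟨U, V, hU, hV, hKU, hKV, hUV⟩ :=
    generalized_tube_lemma hK hK (isOpen_setOfPred_not_bump hX) hKK
  have hT2 : T2Space ↥(U ∩ V) := t2Space_coe_of_forall_not_bump fun x hx y hy =>
    hUV (mk_mem_prod hx.1 hy.2)
  exact ⟨U ∩ V, hU.inter hV, hT2, subset_inter hKU hKV⟩

/-- A quasi-compact subset `K` of a manifold with `NH(K) ∩ K = ∅`
is contained in an open Hausdorff subset. -/
theorem stmt15 {M : Type u} [TopologicalSpace M] (n : ℕ) (hM : IsNManifold M n)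
    (K : Set M) (hK : IsCompact K) (hNH : NH K ∩ K = ∅) :
    ∃ U : Set M, IsOpen U ∧ T2Space U ∧ K ⊆ U :=
  stmt15_general hM.locallyHausdorff_s15 K hK hNH
end
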